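/- arXiv:2503.13243 — 4 statements merged into one kernel-verified Lean document; each statement's English description precedes it below -/
import Mathlib

section
/- The permutation σ₂ fixes the vertex v = (1,1) of Γ, the cyclic group ⟨σ₂⟩ acts transitively on the 2m neighbours of v, the subgroup G = ⟨σ₁, σ₂⟩ acts transitively on the arcs of Γ, and the stabiliser in G of the arc ((1,1),(2,1)) has order 2. -/
/-- The lexicographic product `C_n[mK_1]`: vertices `(i,j)` with `(i₁,j₁) ~ (i₂,j₂)`
iff `i₂ = i₁ + 1` or `i₁ = i₂ + 1` (indices modulo `n`). -/
def lexCycle (n m : ℕ) : SimpleGraph (ZMod n × ZMod m) :=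
  SimpleGraph.fromRel (fun u v => v.1 = u.1 + 1)

/-- The representative in `{1, …, n}` of `i` modulo `n`. -/
def zrep {n : ℕ} (i : ZMod n) : ℕ := if i.val = 0 then n else i.val


/-- coordinates on the infinite cover -/
def cov (n m : ℕ) (h : ZMod m) (x : ℤ) (J : ZMod m) : ZMod n × ZMod m :=
  ((x : ZMod n), if Even ((x - 1) / (n : ℤ)) then J + h else -J + h)

/-- antiperiodic function with prescribed values at 1 and 2 -/
def apf {m : ℕ} (a b : ZMod m) (x : ℤ) : ZMod m :=
  if x % 4 = 1 then a else if x % 4 = 2 then b else if x % 4 = 3 then -a else -b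

lemma cov_eq (n m : ℕ) (h : ZMod m) (q r : ℤ) (J : ZMod m) (h0 : 0 ≤ r) (h1 : r < n) :
    cov n m h (1 + q * n + r) J = ((1 + r : ZMod n), if Even q then J + h else -J + h) := by
  have e : (1 + q * (n : ℤ) + r - 1) / (n : ℤ) = q := by
    rw [show 1 + q * (n : ℤ) + r - 1 = r + q * n by ring,
      Int.add_mul_ediv_right _ _ (by omega), Int.ediv_eq_zero_of_lt h0 h1, zero_add]
  unfold cov
  rw [e]
  simp

lemma cov_rep (n : ℕ) (hn : 0 < n) (x : ℤ) :
    ∃ q r : ℤ, 0 ≤ r ∧ r < n ∧ x = 1 + q * n + r :=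
  ⟨(x - 1) / n, (x - 1) % n, Int.emod_nonneg _ (by omega), Int.emod_lt_of_pos _ (by omega), by
    have := Int.mul_ediv_add_emod (x - 1) n
    linarith⟩

lemma cov_period (n m : ℕ) (h : ZMod m) (hn : 0 < n) (x : ℤ) (J : ZMod m) :
    cov n m h (x + n) J = cov n m h x (-J) := by
  obtain ⟨q, r, h0, h1, rfl⟩ := cov_rep n hn x
  rw [show 1 + q * (n : ℤ) + r + n = 1 + (q + 1) * n + r by ring, cov_eq _ _ _ _ _ _ h0 h1,
    cov_eq _ _ _ _ _ _ h0 h1]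
  by_cases hq : Even q <;> simp [hq, Int.even_add_one]

lemma cov_surj (n m : ℕ) (h : ZMod m) (x : ℤ) (u : ZMod n × ZMod m) (hu : u.1 = x) :
    ∃ J, u = cov n m h x J := by
  by_cases hq : Even ((x - 1) / (n : ℤ))
  · exact ⟨u.2 - h, by ext <;> simp [cov, hu, hq]⟩
  · exact ⟨h - u.2, by ext <;> simp [cov, hu, hq]⟩

lemma cov_inj (n m : ℕ) (h : ZMod m) (x : ℤ) (J L : ZMod m)
    (e : cov n m h x J = cov n m h x L) : J = L := by
  by_cases hq : Even ((x - 1) / (n : ℤ)) <;> simpa [cov, hq] using e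

lemma cov_periodZ (n m : ℕ) (h : ZMod m) (hn : 0 < n) (x t : ℤ) :
    ∃ d : ZMod m, (d = 1 ∨ d = -1) ∧ ∀ x J, cov n m h (x + n * t) J = cov n m h x (d * J) := by
  induction t using Int.induction_on with
  | zero => exact ⟨1, by simp⟩
  | succ i ih =>
    obtain ⟨d, hd, H⟩ := ih
    refine ⟨-d, by rcases hd with rfl | rfl <;> simp, fun x J => ?_⟩
    rw [show x + (n : ℤ) * (i + 1) = x + n * i + n by ring, cov_period _ _ _ hn, H]
    simp
  | pred i ih =>
    obtain ⟨d, hd, H⟩ := ih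
    refine ⟨-d, by rcases hd with rfl | rfl <;> simp, fun x J => ?_⟩
    have := cov_period n m h hn (x + n * (-i - 1)) (-J)
    rw [neg_neg] at this
    rw [← this, show x + (n : ℤ) * (-i - 1) + n = x + n * (-i) by ring, H]
    simp

lemma zrep_cast (n : ℕ) (r : ℤ) (h0 : 0 ≤ r) (h1 : r < n) :
    (zrep (1 + r : ZMod n) : ℤ) = r + 1 := by
  lift r to ℕ using h0
  have h1 : r < n := by exact_mod_cast h1
  have e : (1 + ((r : ℤ) : ZMod n) : ZMod n) = ((r + 1 : ℕ) : ZMod n) := by push_cast; ring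
  rw [e]
  unfold zrep
  rw [ZMod.val_natCast]
  rcases Nat.lt_or_ge (r + 1) n with hl | hl
  · rw [Nat.mod_eq_of_lt hl]; simp
  · have : r + 1 = n := by omega
    rw [this]; simp
    omega

lemma cast_eq_zero_iff' (n : ℕ) (r : ℤ) (h0 : 0 ≤ r) (h1 : r < n) :
    ((r : ZMod n) = 0) ↔ r = 0 := by
  rw [ZMod.intCast_zmod_eq_zero_iff_dvd]
  constructor
  · intro hd
    exact Int.eq_zero_of_dvd_of_nonneg_of_lt h0 h1 hd
  · rintro rfl; simp

lemma cov_s1 (n m : ℕ) (h : ZMod m) (hh : h + h = 1) (hn : 1 < n)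
    (σ₁ : Equiv.Perm (ZMod n × ZMod m))
    (hσ₁ : ∀ (i : ZMod n) (j : ZMod m),
      σ₁ (i, j) = if i = 0 then (i + 1, 1 - j) else (i + 1, j)) (x : ℤ) (J : ZMod m) :
    σ₁ (cov n m h x J) = cov n m h (x + 1) J := by
  obtain ⟨q, r, h0, h1, rfl⟩ := cov_rep n (by omega) x
  rw [cov_eq _ _ _ _ _ _ h0 h1, hσ₁]
  by_cases hr : r = n - 1
  · subst hr
    rw [show 1 + q * (n : ℤ) + (n - 1) + 1 = 1 + (q + 1) * n + 0 by ring,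
      cov_eq _ _ _ _ _ _ le_rfl (by omega)]
    rw [if_pos (by push_cast; simp)]
    rw [← hh]
    by_cases hq : Even q
    · have : ¬ Even (q + 1) := by rw [Int.even_add_one]; simpa using hq
      rw [if_pos hq, if_neg this]
      simp
      ring
    · have : Even (q + 1) := by rw [Int.even_add_one]; exact hq
      rw [if_neg hq, if_pos this]
      simp
      ring
  · rw [show 1 + q * (n : ℤ) + r + 1 = 1 + q * n + (r + 1) by ring,
      cov_eq _ _ _ _ _ _ (by omega) (by omega)]
    have : ¬ (1 + (r : ZMod n) = 0) := by
      have := cast_eq_zero_iff' n (1 + r) (by omega) (by omega)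
      push_cast at this
      rw [this]; omega
    rw [if_neg this]
    push_cast
    ring_nf

lemma cov_s2 (n m : ℕ) (h : ZMod m) (hh : h + h = 1) (hn : 1 < n) (hn4 : n % 4 = 2)
    (σ₂ : Equiv.Perm (ZMod n × ZMod m))
    (hσ₂ : ∀ (i : ZMod n) (j : ZMod m),
      σ₂ (i, j) = if i = 1 then (2 - i, 2 - j)
        else if zrep i % 4 = 0 ∨ zrep i % 4 = 3 then (2 - i, j + 1) else (2 - i, j - 1))
    (x : ℤ) (J : ZMod m) :
    σ₂ (cov n m h x J) = cov n m h (2 - x) (-J + apf 1 1 x) := by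
  obtain ⟨q, r, h0, h1, rfl⟩ := cov_rep n (by omega) x
  rw [cov_eq _ _ _ _ _ _ h0 h1, hσ₂]
  obtain ⟨t, ht⟩ : ∃ t : ℤ, (n : ℤ) = 4 * t + 2 := ⟨n / 4, by omega⟩
  have key : (1 + q * (n : ℤ) + r) % 4 = (1 + 2 * q + r) % 4 := by
    rw [ht, show 1 + q * (4 * t + 2) + r = 1 + 2 * q + r + 4 * (q * t) by ring]
    omega
  have h2 : (2 : ZMod m) = h + h + (h + h) := by rw [hh]; norm_num
  have hz := zrep_cast n r h0 h1
  by_cases hr : r = 0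
  · subst hr
    rw [show 2 - (1 + q * (n : ℤ) + 0) = 1 + (-q) * n + 0 by ring,
      cov_eq _ _ _ _ _ _ le_rfl (by omega)]
    rw [if_pos (by simp)]
    unfold apf
    rw [key]
    rcases Int.even_or_odd' q with ⟨p, rfl | rfl⟩
    · rw [if_pos (by omega : (1 + 2 * (2 * p) + 0) % 4 = 1)]
      simp
      constructor
      · norm_num
      · linear_combination -hh
    · rw [if_neg (by omega : ¬ (1 + 2 * (2 * p + 1) + 0) % 4 = 1),
        if_neg (by omega : ¬ (1 + 2 * (2 * p + 1) + 0) % 4 = 2),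
        if_pos (by omega : (1 + 2 * (2 * p + 1) + 0) % 4 = 3)]
      have : ¬ Even (2 * p + 1) := by simp
      rw [if_neg this, if_neg (by rw [even_neg]; exact this)]
      simp
      constructor
      · norm_num
      · linear_combination -hh
  · rw [show 2 - (1 + q * (n : ℤ) + r) = 1 + (-q - 1) * n + (n - r) by ring,
      cov_eq _ _ _ _ _ _ (by omega) (by omega)]
    have hr1 : ¬ ((1 : ZMod n) + r = 1) := by
      rw [add_eq_left, cast_eq_zero_iff' n r h0 h1]; exact hr
    rw [if_neg hr1]
    have e1 : (2 - (1 + (r : ZMod n))) = 1 + (((n : ℤ) - r : ℤ) : ZMod n) := by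
      push_cast; simp; ring
    rw [e1]
    generalize zrep (1 + (r : ZMod n)) = z at *
    unfold apf
    rw [key]
    rcases Int.even_or_odd' q with ⟨p, rfl | rfl⟩
    · have o1 : Even (2 * p) := by simp
      have o2 : ¬ Even (-(2 * p) - 1) := by
        rw [Int.not_even_iff_odd]; exact ⟨-p - 1, by ring⟩
      simp only [if_pos o1, if_neg o2]
      split_ifs <;> first | (exfalso; omega) | (congr 1; ring)
    · have o1 : ¬ Even (2 * p + 1) := by simp
      have o2 : Even (-(2 * p + 1) - 1) := ⟨-p - 1, by ring⟩
      simp only [if_neg o1, if_pos o2]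
      split_ifs <;> first | (exfalso; omega) | (congr 1; ring)

lemma apf_anti {m : ℕ} (a b : ZMod m) (x : ℤ) : apf a b (x + 2) = - apf a b x := by
  unfold apf
  split_ifs <;> first | (exfalso; omega) | simp

lemma apf_unique {m : ℕ} (f : ℤ → ZMod m) (hf : ∀ x, f (x + 2) = - f x) (x : ℤ) :
    f x = apf (f 1) (f 2) x := by
  have key : ∀ x, f x = apf (f 1) (f 2) x ∧ f (x + 1) = apf (f 1) (f 2) (x + 1) := by
    intro x
    induction x using Int.induction_on with
    | zero =>
      have := hf 0
      norm_num at this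
      constructor
      · simp [apf, this]
      · simp [apf]
    | succ i ih =>
      refine ⟨ih.2, ?_⟩
      rw [show (i : ℤ) + 1 + 1 = i + 2 by ring, hf, apf_anti, ih.1]
    | pred i ih =>
      have h1 := hf (-i - 1)
      have h2 := apf_anti (f 1) (f 2) (-i - 1)
      rw [show -(i : ℤ) - 1 + 2 = -i + 1 by ring] at h1 h2
      refine ⟨?_, by simpa using ih.1⟩
      have := ih.2
      rw [h1, h2] at this
      exact neg_injective this
  exact (key x).1

/-- shape of the elements of the group -/
def shp (n m : ℕ) (h : ZMod m) (g : Equiv.Perm (ZMod n × ZMod m)) : Prop :=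
  ∃ (e k : ℤ) (d : ZMod m) (f : ℤ → ZMod m), (e = 1 ∨ e = -1) ∧ (d = 1 ∨ d = -1) ∧
    (∀ x, f (x + 2) = - f x) ∧ ∀ x J, g (cov n m h x J) = cov n m h (e * x + k) (d * J + f x)

lemma anti_sub {m : ℕ} (f : ℤ → ZMod m) (hf : ∀ x, f (x + 2) = - f x) (x : ℤ) :
    f (x - 2) = - f x := by
  have := hf (x - 2)
  rw [sub_add_cancel] at this
  rw [this, neg_neg]

lemma shp_mul {n m : ℕ} {h : ZMod m} {g g' : Equiv.Perm (ZMod n × ZMod m)}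
    (hg : shp n m h g) (hg' : shp n m h g') : shp n m h (g * g') := by
  obtain ⟨e, k, d, f, he, hd, hf, H⟩ := hg
  obtain ⟨e', k', d', f', he', hd', hf', H'⟩ := hg'
  refine ⟨e * e', e * k' + k, d * d', fun x => d * f' x + f (e' * x + k'), ?_, ?_, ?_, ?_⟩
  · rcases he with rfl | rfl <;> rcases he' with rfl | rfl <;> simp
  · rcases hd with rfl | rfl <;> rcases hd' with rfl | rfl <;> simp
  · intro x
    simp only [hf']
    rcases he' with rfl | rfl
    · rw [show 1 * (x + 2) + k' = 1 * x + k' + 2 by ring, hf]; ring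
    · rw [show -1 * (x + 2) + k' = -1 * x + k' - 2 by ring, anti_sub f hf]; ring
  · intro x J
    rw [Equiv.Perm.mul_apply, H', H]
    congr 1 <;> ring

lemma shp_inv {n m : ℕ} {h : ZMod m} {g : Equiv.Perm (ZMod n × ZMod m)}
    (hg : shp n m h g) : shp n m h g⁻¹ := by
  obtain ⟨e, k, d, f, he, hd, hf, H⟩ := hg
  have ee : e * e = 1 := by rcases he with rfl | rfl <;> simp
  have dd : d * d = 1 := by rcases hd with rfl | rfl <;> simp
  refine ⟨e, -(e * k), d, fun x => - (d * f (e * x - e * k)), he, hd, ?_, ?_⟩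
  · intro x
    beta_reduce
    rcases he with rfl | rfl
    · rw [show 1 * (x + 2) - 1 * k = 1 * x - 1 * k + 2 by ring, hf]; ring
    · rw [show -1 * (x + 2) - -1 * k = -1 * x - -1 * k - 2 by ring, anti_sub f hf]; ring
  · intro x J
    rw [Equiv.Perm.inv_eq_iff_eq, H]
    congr 1
    · linear_combination (k - x) * ee
    · rw [← sub_eq_add_neg (e * x)]
      linear_combination (f (e * x - e * k) - J) * dd

theorem statement16
    (m s n : ℕ) (hm : 3 ≤ m) (hmo : Odd m) (hs : 0 < s) (hs4 : s % 4 = 2) (hn : n = s * m)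
    (σ₁ σ₂ : Equiv.Perm (ZMod n × ZMod m))
    (hσ₁ : ∀ (i : ZMod n) (j : ZMod m),
      σ₁ (i, j) = if i = 0 then (i + 1, 1 - j) else (i + 1, j))
    (hσ₂ : ∀ (i : ZMod n) (j : ZMod m),
      σ₂ (i, j) = if i = 1 then (2 - i, 2 - j)
        else if zrep i % 4 = 0 ∨ zrep i % 4 = 3 then (2 - i, j + 1) else (2 - i, j - 1))
    :
    σ₂ ((1, 1) : ZMod n × ZMod m) = (1, 1) ∧
      (∀ w w' : ZMod n × ZMod m,
        (lexCycle n m).Adj ((1, 1) : ZMod n × ZMod m) w →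
        (lexCycle n m).Adj ((1, 1) : ZMod n × ZMod m) w' →
        ∃ k : ℤ, (σ₂ ^ k) w = w') ∧
      (∀ u₁ w₁ u₂ w₂ : ZMod n × ZMod m,
        (lexCycle n m).Adj u₁ w₁ → (lexCycle n m).Adj u₂ w₂ →
        ∃ g ∈ Subgroup.closure {σ₁, σ₂}, g u₁ = u₂ ∧ g w₁ = w₂) ∧
      Nat.card {g : Equiv.Perm (ZMod n × ZMod m) |
        g ∈ Subgroup.closure {σ₁, σ₂} ∧
        g ((1, 1) : ZMod n × ZMod m) = (1, 1) ∧
        g ((2, 1) : ZMod n × ZMod m) = (2, 1)} = 2 := by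
  have hn0 : 1 < n := by rw [hn]; nlinarith
  have hn6 : 6 ≤ n := by
    have : 2 ≤ s := by omega
    rw [hn]; nlinarith
  have hn4 : n % 4 = 2 := by
    obtain ⟨t, rfl⟩ := hmo
    obtain ⟨u, rfl⟩ : ∃ u, s = 4 * u + 2 := ⟨s / 4, by omega⟩
    rw [hn, show (4 * u + 2) * (2 * t + 1) = 4 * (u * (2 * t + 1) + t) + 2 by ring]
    omega
  obtain ⟨h, hh⟩ : ∃ h : ZMod m, h + h = 1 := by
    obtain ⟨t, rfl⟩ := hmo
    refine ⟨((t + 1 : ℕ) : ZMod (2 * t + 1)), ?_⟩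
    have : ((2 * t + 1 : ℕ) : ZMod (2 * t + 1)) = 0 := ZMod.natCast_self _
    push_cast at this ⊢
    linear_combination this
  have : Fact (1 < m) := ⟨by omega⟩
  have s1 := cov_s1 n m h hh hn0 σ₁ hσ₁
  have s2 := cov_s2 n m h hh hn0 hn4 σ₂ hσ₂
  have m1 : σ₁ ∈ Subgroup.closure {σ₁, σ₂} := Subgroup.subset_closure (by simp)
  have m2 : σ₂ ∈ Subgroup.closure {σ₁, σ₂} := Subgroup.subset_closure (by simp)
  have s1i : ∀ x J, σ₁⁻¹ (cov n m h x J) = cov n m h (x - 1) J := by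
    intro x J
    rw [Equiv.Perm.inv_eq_iff_eq, s1, sub_add_cancel]
  have s1z : ∀ (k : ℤ) x J, (σ₁ ^ k) (cov n m h x J) = cov n m h (x + k) J := by
    intro k
    induction k using Int.induction_on with
    | zero => simp
    | succ i ih =>
      intro x J
      rw [zpow_add_one, Equiv.Perm.mul_apply, s1, ih]; congr 1; ring
    | pred i ih =>
      intro x J
      rw [zpow_sub_one, Equiv.Perm.mul_apply, s1i, ih]; congr 1; ring
  have s22 : ∀ x J, (σ₂ ^ 2) (cov n m h x J) = cov n m h x (J + apf 0 (-2) x) := by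
    intro x J
    rw [pow_two, Equiv.Perm.mul_apply, s2, s2]
    congr 1
    · ring
    · unfold apf
      split_ifs <;> first | (exfalso; omega) | ring
  have s2k : ∀ (k : ℕ) x J, ((σ₂ ^ 2) ^ k) (cov n m h x J)
      = cov n m h x (J + apf 0 (-2 * (k : ZMod m)) x) := by
    intro k
    induction k with
    | zero => intro x J; simp [apf]
    | succ k ih =>
      intro x J
      rw [pow_succ, Equiv.Perm.mul_apply, s22, ih]
      congr 1
      unfold apf
      push_cast
      split_ifs <;> ring
  have s2b : ∀ b : ZMod m, ∃ k : ℕ, ∀ x J, ((σ₂ ^ 2) ^ k) (cov n m h x J)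
      = cov n m h x (J + apf 0 b x) := by
    intro b
    have : NeZero m := ⟨by omega⟩
    refine ⟨(-(h * b)).val, fun x J => ?_⟩
    rw [s2k, ZMod.natCast_zmod_val, show -2 * -(h * b) = b by linear_combination b * hh]
  have tau : ∀ a b : ZMod m, ∃ g ∈ Subgroup.closure {σ₁, σ₂}, ∀ x J, g (cov n m h x J)
      = cov n m h x (J + apf a b x) := by
    intro a b
    obtain ⟨k, hk⟩ := s2b b
    obtain ⟨l, hl⟩ := s2b (-a)
    refine ⟨σ₁ * (σ₂ ^ 2) ^ l * σ₁⁻¹ * (σ₂ ^ 2) ^ k, ?_, ?_⟩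
    · have q := fun k => Subgroup.pow_mem _ (Subgroup.pow_mem _ m2 2) k
      exact mul_mem (mul_mem (mul_mem m1 (q l)) (inv_mem m1)) (q k)
    · intro x J
      simp only [Equiv.Perm.mul_apply]
      rw [hk, s1i, hl, s1]
      congr 1
      · ring
      · unfold apf
        split_ifs <;> first | (exfalso; omega) | ring
  have c1 : ((1, 1) : ZMod n × ZMod m) = cov n m h 1 h := by
    simp [cov, hh]
  have c2 : ((2, 1) : ZMod n × ZMod m) = cov n m h 2 h := by
    have := cov_eq n m h 0 1 h (by omega) (by omega)
    norm_num at this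
    rw [this, hh]
  have adj : ∀ u w : ZMod n × ZMod m, (lexCycle n m).Adj u w →
      (w.1 = u.1 + 1 ∨ u.1 = w.1 + 1) := by
    intro u w hA
    exact ((SimpleGraph.fromRel_adj _ _ _).1 hA).2
  refine ⟨?_, ?_, ?_, ?_⟩
  · rw [hσ₂]; norm_num
  · have key : ∀ w : ZMod n × ZMod m, (lexCycle n m).Adj ((1, 1) : ZMod n × ZMod m) w →
        ∃ k : ℤ, (σ₂ ^ k) (cov n m h 2 0) = w := by
      have base : ∀ L, ∃ k : ℤ, (σ₂ ^ k) (cov n m h 2 0) = cov n m h 2 L := by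
        intro L
        obtain ⟨k, hk⟩ := s2b L
        refine ⟨((2 * k : ℕ) : ℤ), ?_⟩
        rw [zpow_natCast, pow_mul, hk]
        simp [apf]
      intro w hw
      rcases adj _ _ hw with e | e
      · obtain ⟨L, rfl⟩ := cov_surj n m h 2 w (by rw [e]; norm_num)
        exact base L
      · obtain ⟨L, rfl⟩ := cov_surj n m h 0 w (by simpa using e.symm)
        obtain ⟨k, hk⟩ := base (1 - L)
        refine ⟨1 + k, ?_⟩
        rw [zpow_add, Equiv.Perm.mul_apply, hk, zpow_one, s2]
        simp [apf]
    intro w w' hw hw'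
    obtain ⟨k, rfl⟩ := key w hw
    obtain ⟨l, rfl⟩ := key w' hw'
    refine ⟨l - k, ?_⟩
    rw [← Equiv.Perm.mul_apply, ← zpow_add, sub_add_cancel]
  · have key0 : ∀ J L, ∃ g ∈ Subgroup.closure {σ₁, σ₂},
        g (cov n m h 1 J) = cov n m h 1 0 ∧ g (cov n m h 2 L) = cov n m h 2 0 := by
      intro J L
      obtain ⟨g, hg, H⟩ := tau (-J) (-L)
      refine ⟨g, hg, ?_, ?_⟩ <;> rw [H] <;> simp [apf]
    have key : ∀ u w : ZMod n × ZMod m, (lexCycle n m).Adj u w →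
        ∃ g ∈ Subgroup.closure {σ₁, σ₂}, g u = cov n m h 1 0 ∧ g w = cov n m h 2 0 := by
      intro u w hA
      obtain ⟨x, hx⟩ := ZMod.intCast_surjective u.1
      obtain ⟨J, hJ⟩ := cov_surj n m h x u hx.symm
      rcases adj _ _ hA with e | e
      · obtain ⟨L, rfl⟩ := cov_surj n m h (x + 1) w (by rw [e, ← hx]; push_cast; rfl)
        subst hJ
        obtain ⟨g, hg, H1, H2⟩ := key0 J L
        refine ⟨g * σ₁ ^ (1 - x), mul_mem hg (Subgroup.zpow_mem _ m1 _), ?_, ?_⟩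
        · rw [Equiv.Perm.mul_apply, s1z, ← H1]; congr 2; ring
        · rw [Equiv.Perm.mul_apply, s1z, ← H2]; congr 2; ring
      · obtain ⟨L, rfl⟩ := cov_surj n m h (x - 1) w (by push_cast; rw [hx, e]; ring)
        subst hJ
        obtain ⟨g, hg, H1, H2⟩ := key0 (-J + apf 1 1 1) (-L + apf 1 1 0)
        refine ⟨g * (σ₂ * σ₁ ^ (1 - x)),
          mul_mem hg (mul_mem m2 (Subgroup.zpow_mem _ m1 _)), ?_, ?_⟩
        · rw [Equiv.Perm.mul_apply, Equiv.Perm.mul_apply, s1z,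
            show x + (1 - x) = 1 by ring, s2, ← H1]; norm_num
        · rw [Equiv.Perm.mul_apply, Equiv.Perm.mul_apply, s1z,
            show x - 1 + (1 - x) = 0 by ring, s2, ← H2]; norm_num
    intro u₁ w₁ u₂ w₂ hA hB
    obtain ⟨g, hg, a1, a2⟩ := key _ _ hA
    obtain ⟨g', hg', b1, b2⟩ := key _ _ hB
    refine ⟨g'⁻¹ * g, mul_mem (inv_mem hg') hg, ?_, ?_⟩
    · rw [Equiv.Perm.mul_apply, Equiv.Perm.inv_eq_iff_eq, a1, b1]
    · rw [Equiv.Perm.mul_apply, Equiv.Perm.inv_eq_iff_eq, a2, b2]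
  · have ext' : ∀ g g' : Equiv.Perm (ZMod n × ZMod m),
        (∀ x J, g (cov n m h x J) = g' (cov n m h x J)) → g = g' := by
      intro g g' H
      refine Equiv.ext fun u => ?_
      obtain ⟨x, hx⟩ := ZMod.intCast_surjective u.1
      obtain ⟨J, rfl⟩ := cov_surj n m h x u hx.symm
      exact H x J
    obtain ⟨ι, hι, Hι⟩ : ∃ g ∈ Subgroup.closure {σ₁, σ₂}, ∀ x J, g (cov n m h x J)
        = cov n m h x (-J + apf 1 1 x) := by
      obtain ⟨g, hg, H⟩ := tau 1 1
      refine ⟨g * σ₁ ^ (n : ℤ), mul_mem hg (Subgroup.zpow_mem _ m1 _), fun x J => ?_⟩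
      rw [Equiv.Perm.mul_apply, s1z, cov_period _ _ _ (by omega), H]
    have hshp : ∀ g ∈ Subgroup.closure {σ₁, σ₂}, shp n m h g := by
      intro g hg
      induction hg using Subgroup.closure_induction with
      | mem g hg =>
        rcases hg with rfl | rfl
        · exact ⟨1, 1, 1, fun _ => 0, by simp, by simp, by simp, fun x J => by simp [s1]⟩
        · exact ⟨-1, 2, -1, apf 1 1, by simp, by simp, apf_anti 1 1, fun x J => by
            rw [s2]; congr 1 <;> ring⟩
      | one => exact ⟨1, 0, 1, fun _ => 0, by simp, by simp, by simp, fun x J => by simp⟩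
      | mul g g' _ _ a b => exact shp_mul a b
      | inv g _ a => exact shp_inv a
    have hset : {g : Equiv.Perm (ZMod n × ZMod m) |
        g ∈ Subgroup.closure {σ₁, σ₂} ∧
        g ((1, 1) : ZMod n × ZMod m) = (1, 1) ∧
        g ((2, 1) : ZMod n × ZMod m) = (2, 1)} = {1, ι} := by
      ext g
      simp only [Set.mem_setOf_eq, Set.mem_insert_iff, Set.mem_singleton_iff]
      constructor
      · rintro ⟨hg, g1, g2⟩
        obtain ⟨e, k, d, f, he, hd, hf, H⟩ := hshp g hg
        rw [c1, H] at g1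
        rw [c2, H] at g2
        have p1 := congrArg Prod.fst g1
        have p2 := congrArg Prod.fst g2
        simp only [cov] at p1 p2
        rw [ZMod.intCast_eq_intCast_iff_dvd_sub] at p1 p2
        have he1 : e = 1 := by
          rcases he with rfl | rfl
          · rfl
          · exfalso
            have h3 := dvd_sub p2 p1
            rw [show (2 - (-1 * 2 + k) - (1 - (-1 * 1 + k)) : ℤ) = 2 by ring] at h3
            have := Int.le_of_dvd (by norm_num) h3
            omega
        subst he1
        obtain ⟨t, ht⟩ := p1
        obtain rfl : k = n * (-t) := by linarith
        obtain ⟨d', hd', P⟩ := cov_periodZ n m h (by omega) 0 (-t)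
        have H' : ∀ x J, g (cov n m h x J) = cov n m h x (d' * d * J + d' * f x) := by
          intro x J
          rw [H, one_mul, P]; congr 1; ring
        rw [← H, H'] at g1 g2
        have q1 := cov_inj _ _ _ _ _ _ g1
        have q2 := cov_inj _ _ _ _ _ _ g2
        have hf' := apf_unique (fun x => d' * f x) (fun x => by simp [hf])
        have hdd : d' * d = 1 ∨ d' * d = -1 := by
          rcases hd with rfl | rfl <;> rcases hd' with rfl | rfl <;> simp
        rcases hdd with hdd | hdd
        · left
          rw [hdd] at q1 q2
          have r1 : d' * f 1 = 0 := by linear_combination q1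
          have r2 : d' * f 2 = 0 := by linear_combination q2
          simp only [r1, r2] at hf'
          apply ext'
          intro x J
          rw [H', hf', hdd]
          simp [apf]
        · right
          rw [hdd] at q1 q2
          have r1 : d' * f 1 = 1 := by linear_combination q1 + hh
          have r2 : d' * f 2 = 1 := by linear_combination q2 + hh
          simp only [r1, r2] at hf'
          apply ext'
          intro x J
          rw [H', hf', hdd, Hι, neg_one_mul]
      · rintro (rfl | rfl)
        · exact ⟨one_mem _, rfl, rfl⟩
        · refine ⟨hι, ?_, ?_⟩
          · rw [c1, Hι]; congr 1; simp [apf]; linear_combination -hh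
          · rw [c2, Hι]; congr 1; simp [apf]; linear_combination -hh
    have hne : (1 : Equiv.Perm (ZMod n × ZMod m)) ≠ ι := by
      intro e
      have := Hι 1 0
      rw [← e, Equiv.Perm.one_apply] at this
      have := cov_inj _ _ _ _ _ _ this
      simp [apf] at this
    rw [hset, Nat.card_coe_set_eq, Set.ncard_pair hne]
end

section
/- The permutation η₁ has order n, the permutation η₂ has order 2m, the product η₁η₂ has order 2, and the subgroup H = ⟨η₁, η₂⟩ of the automorphism group of Γ has order 2m²n. -/
section helpers

/-- parity sign -/
def chi (n m : ℕ) (i : ZMod n) : ZMod m := (-1) ^ i.val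

theorem chi_natCast {n m : ℕ} (hn : Even n) (k : ℕ) :
    chi n m (k : ZMod n) = (-1) ^ k := by
  unfold chi
  rw [ZMod.val_natCast]
  conv_rhs => rw [← Nat.mod_add_div k n]
  rw [pow_add, pow_mul, hn.neg_one_pow, one_pow, mul_one]

theorem chi_add {n m : ℕ} [NeZero n] (hn : Even n) (i j : ZMod n) :
    chi n m (i + j) = chi n m i * chi n m j := by
  obtain ⟨a, rfl⟩ := ZMod.natCast_zmod_surjective i
  obtain ⟨b, rfl⟩ := ZMod.natCast_zmod_surjective j
  rw [← Nat.cast_add, chi_natCast hn, chi_natCast hn, chi_natCast hn, pow_add]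

theorem chi_sq {n m : ℕ} (i : ZMod n) : chi n m i * chi n m i = 1 := by
  unfold chi
  rw [← mul_pow]; simp

theorem chi_sub {n m : ℕ} [NeZero n] (hn : Even n) (i j : ZMod n) :
    chi n m (i - j) = chi n m i * chi n m j := by
  have h := chi_add (m := m) hn (i - j) j
  rw [sub_add_cancel] at h
  rw [h, mul_assoc, chi_sq, mul_one]

theorem zrep_four {n m : ℕ} [NeZero n] (hn : n % 4 = 2) (hd : m ∣ n) (i : ZMod n) :
    4 * (((zrep i - 1) / 2 : ℕ) : ZMod m) = 2 * ZMod.castHom hd (ZMod m) i - 3 - chi n m i := by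
  have hz : ((zrep i : ℕ) : ZMod n) = i := by
    unfold zrep
    split_ifs with h
    · rw [ZMod.natCast_self, eq_comm]; exact (ZMod.val_eq_zero i).1 h
    · exact ZMod.natCast_zmod_val i
  have hp : 1 ≤ zrep i := by
    unfold zrep
    have := NeZero.pos n
    split_ifs <;> omega
  generalize zrep i = z at *
  subst hz
  rw [chi_natCast (Nat.even_iff.2 (by omega)), map_natCast]
  obtain ⟨k, hk | hk⟩ : ∃ k, z = 2 * k + 1 ∨ z = 2 * k + 2 := ⟨(z - 1) / 2, by omega⟩
  · have : (z - 1) / 2 = k := by omega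
    rw [this, hk, pow_succ, pow_mul]; push_cast; simp; ring
  · have : (z - 1) / 2 = k := by omega
    rw [this, hk, pow_add, pow_mul]; push_cast; simp; ring

/-- normal form of the elements of the group -/
def NF {n m : ℕ} (L : ZMod n → ZMod m) (q : ZMod m) (g : Equiv.Perm (ZMod n × ZMod m)) :
    Bool × ZMod n × ZMod m × ZMod m → Prop
  | (false, a, α, β) => ∀ i j, g (i, j) = (i + a, 1 + chi n m a * (j - 1) + α * L i + β)
  | (true, a, α, β) => ∀ i j, g (i, j) =
      (a - i, 1 - chi n m a * (j - 1) + α * L i + β - q * chi n m a * chi n m i)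

theorem NF_mul {n m : ℕ} [NeZero n] (hn : Even n) (hd : m ∣ n) (q : ZMod m)
    (g h : Equiv.Perm (ZMod n × ZMod m)) (b c : Bool) (a a' : ZMod n) (α β α' β' : ZMod m)
    (hg : NF (ZMod.castHom hd (ZMod m)) q g (b, a, α, β))
    (hh : NF (ZMod.castHom hd (ZMod m)) q h (c, a', α', β')) :
    ∃ α'' β'', NF (ZMod.castHom hd (ZMod m)) q (g * h)
      (xor b c, (if b then a - a' else a + a'), α'', β'') := by
  set L := ZMod.castHom hd (ZMod m)
  cases b <;> cases c
  · refine ⟨chi n m a * α' + α, chi n m a * β' + α * L a' + β, ?_⟩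
    intro i j
    rw [Equiv.Perm.mul_apply, hh, hg]
    ext
    · simp; ring
    · simp [chi_add hn]; ring
  · refine ⟨chi n m a * α' - α, chi n m a * β' + α * L a' + β, ?_⟩
    intro i j
    rw [Equiv.Perm.mul_apply, hh, hg]
    ext
    · simp; ring
    · simp [chi_add hn]; ring
  · refine ⟨-chi n m a * α' + α, -chi n m a * β' + α * L a' + β, ?_⟩
    intro i j
    rw [Equiv.Perm.mul_apply, hh, hg]
    ext
    · simp; ring
    · simp [chi_add hn, chi_sub hn]; ring
  · refine ⟨-chi n m a * α' - α, -chi n m a * β' + α * L a' + β, ?_⟩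
    intro i j
    rw [Equiv.Perm.mul_apply, hh, hg]
    ext
    · simp; ring
    · simp [chi_sub hn]; ring

theorem NF_tau {n m : ℕ} (hd : m ∣ n) (q : ZMod m)
    (g h : Equiv.Perm (ZMod n × ZMod m)) (c : Bool) (a : ZMod n) (x y α β : ZMod m)
    (hg : ∀ i j, g (i, j) = (i, j + x * ZMod.castHom hd (ZMod m) i + y))
    (hh : NF (ZMod.castHom hd (ZMod m)) q h (c, a, α, β)) :
    NF (ZMod.castHom hd (ZMod m)) q (g * h)
      (c, a, (if c then α - x else α + x), β + x * ZMod.castHom hd (ZMod m) a + y) := by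
  set L := ZMod.castHom hd (ZMod m)
  cases c
  · intro i j
    rw [Equiv.Perm.mul_apply, hh, hg]
    ext
    · simp
    · simp; ring
  · intro i j
    rw [Equiv.Perm.mul_apply, hh, hg]
    ext
    · simp
    · simp; ring

theorem NF_unique {n m : ℕ} (hn : 3 ≤ n) (hd : m ∣ n) (q : ZMod m)
    (g : Equiv.Perm (ZMod n × ZMod m)) (t t' : Bool × ZMod n × ZMod m × ZMod m)
    (hg : NF (ZMod.castHom hd (ZMod m)) q g t)
    (hh : NF (ZMod.castHom hd (ZMod m)) q g t') : t = t' := by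
  have h2 : (2 : ZMod n) ≠ 0 := by
    intro h
    have : ((2 : ℕ) : ZMod n) = 0 := by exact_mod_cast h
    rw [ZMod.natCast_eq_zero_iff] at this
    have := Nat.le_of_dvd (by norm_num) this
    omega
  obtain ⟨b, a, α, β⟩ := t
  obtain ⟨c, a', α', β'⟩ := t'
  cases b <;> cases c
  all_goals
    have k0 := (hg 0 1).symm.trans (hh 0 1)
    have k1 := (hg 1 1).symm.trans (hh 1 1)
    simp only [Prod.mk.injEq, NF, map_zero, map_one, zero_add, sub_zero] at k0 k1
    obtain ⟨rfl, k0⟩ := k0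
    obtain ⟨k2, k1⟩ := k1
  · have hb : β = β' := by linear_combination k0
    have ha : α = α' := by linear_combination k1 - k0
    rw [ha, hb]
  · exact absurd (by linear_combination k2) h2
  · exact absurd (by linear_combination -k2) h2
  · have hb : β = β' := by linear_combination k0
    have ha : α = α' := by linear_combination k1 - k0
    rw [ha, hb]

end helpers

theorem statement17
    (m s n : ℕ) (hm : 3 ≤ m) (hmo : Odd m) (hs : 0 < s) (hs4 : s % 4 = 2) (hn : n = s * m)
    (η₁ η₂ : Equiv.Perm (ZMod n × ZMod m))
    (hη₁ : ∀ (i : ZMod n) (j : ZMod m), η₁ (i, j) = (i + 1, 2 - j))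
    (hη₂ : ∀ (i : ZMod n) (j : ZMod m),
      η₂ (i, j) = (2 - i, 2 - j + (((zrep i - 1) / 2 : ℕ) : ZMod m)))
    :
    orderOf η₁ = n ∧ orderOf η₂ = 2 * m ∧ orderOf (η₁ * η₂) = 2 ∧
      Nat.card (Subgroup.closure {η₁, η₂} : Subgroup (Equiv.Perm (ZMod n × ZMod m))) = 2 * m ^ 2 * n := by
  have hd : m ∣ n := ⟨s, by rw [hn, mul_comm]⟩
  have hn4 : n % 4 = 2 := by
    obtain ⟨k, rfl⟩ := hmo
    obtain ⟨l, rfl⟩ : ∃ l, s = 4 * l + 2 := ⟨s / 4, by omega⟩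
    have : n = 4 * (l * (2 * k + 1) + k) + 2 := by rw [hn]; ring
    omega
  have hne : Even n := Nat.even_iff.2 (by omega)
  have hn6 : 6 ≤ n := by
    have : 2 ≤ s := by omega
    rw [hn]; nlinarith
  clear hs hs4 hn
  have : NeZero n := ⟨by omega⟩
  have : NeZero m := ⟨by omega⟩
  obtain ⟨q, hq⟩ : ∃ q : ZMod m, 4 * q = 1 := by
    have h : Nat.Coprime 4 m := by
      have h2 : Nat.Coprime 2 m := (Nat.coprime_two_left).2 hmo
      exact Nat.Coprime.pow_left 2 h2
    refine ⟨((4 : ℕ) : ZMod m)⁻¹, ?_⟩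
    have := ZMod.coe_mul_inv_eq_one 4 h
    exact_mod_cast this
  set L := ZMod.castHom hd (ZMod m) with hL
  have hη₂' : ∀ i j, η₂ (i, j) = (2 - i, 2 - j + q * (2 * L i - 3 - chi n m i)) := by
    intro i j
    rw [hη₂]
    have := zrep_four hn4 hd i
    congr 2
    linear_combination q * this - (((zrep i - 1) / 2 : ℕ) : ZMod m) * hq
  clear hη₂
  have chi1 : chi n m 1 = -1 := by
    have := chi_natCast (m := m) hne 1
    simpa using this
  have chi2 : chi n m 2 = 1 := by
    have := chi_natCast (m := m) hne 2
    simpa using this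
  have hcast : ∀ k : ℕ, 0 < k → k < 6 → (k : ZMod n) ≠ 0 := by
    intro k hk hk6 h
    rw [ZMod.natCast_eq_zero_iff] at h
    have := Nat.le_of_dvd hk h
    omega
  have L2 : L 2 = 2 := map_ofNat L 2
  have hp1 : ∀ (k : ℕ) i j, (η₁ ^ k) (i, j) = (i + k, 1 + (-1) ^ k * (j - 1)) := by
    intro k
    induction k with
    | zero => intro i j; simp
    | succ k ih =>
      intro i j
      rw [pow_succ', Equiv.Perm.mul_apply, ih, hη₁]
      ext
      · simp; ring
      · simp; ring
  have hT : ∀ i j, (η₂ ^ 2) (i, j) = (i, j + 1 - L i) := by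
    intro i j
    rw [pow_two, Equiv.Perm.mul_apply, hη₂', hη₂']
    ext
    · simp
    · simp [chi_sub hne, chi2, L2]; linear_combination (1 - L i) * hq
  have hTk : ∀ (k : ℕ) i j, ((η₂ ^ 2) ^ k) (i, j) = (i, j + k * (1 - L i)) := by
    intro k
    induction k with
    | zero => intro i j; simp
    | succ k ih =>
      intro i j
      rw [pow_succ', Equiv.Perm.mul_apply, ih, hT]
      ext
      · simp
      · simp; ring
  have h1i : ∀ i j, η₁⁻¹ (i, j) = (i - 1, 2 - j) := by
    intro i j
    rw [Equiv.Perm.inv_eq_iff_eq, hη₁]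
    simp
  have hU : ∀ i j, (η₁ * η₂ ^ 2 * η₁⁻¹) (i, j) = (i, j + L i - 2) := by
    intro i j
    rw [Equiv.Perm.mul_apply, Equiv.Perm.mul_apply, h1i, hT, hη₁]
    ext
    · simp
    · simp; ring
  have hUk : ∀ (k : ℕ) i j, ((η₁ * η₂ ^ 2 * η₁⁻¹) ^ k) (i, j) = (i, j + k * (L i - 2)) := by
    intro k
    induction k with
    | zero => intro i j; simp
    | succ k ih =>
      intro i j
      rw [pow_succ', Equiv.Perm.mul_apply, ih, hU]
      ext
      · simp
      · simp; ring
  refine ⟨?_, ?_, ?_, ?_⟩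
  · apply Nat.dvd_antisymm
    · apply orderOf_dvd_of_pow_eq_one
      ext1 ⟨i, j⟩
      rw [hp1]
      simp [hne.neg_one_pow]
    · have h := hp1 (orderOf η₁) 0 1
      rw [pow_orderOf_eq_one] at h
      have h' := congrArg Prod.fst h
      simp only [Equiv.Perm.coe_one, id, zero_add] at h'
      exact (ZMod.natCast_eq_zero_iff _ _).1 h'.symm
  · apply Nat.dvd_antisymm
    · apply orderOf_dvd_of_pow_eq_one
      ext1 ⟨i, j⟩
      rw [pow_mul, hTk]
      simp
    · have h0 := pow_orderOf_eq_one η₂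
      rcases Nat.even_or_odd' (orderOf η₂) with ⟨k, hk | hk⟩
      · rw [hk] at h0 ⊢
        rw [pow_mul] at h0
        have h := hTk k 0 0
        rw [h0] at h
        have h' := congrArg Prod.snd h
        simp only [Equiv.Perm.coe_one, id, zero_add, map_zero, sub_zero, mul_one] at h'
        exact Nat.mul_dvd_mul_left 2 ((ZMod.natCast_eq_zero_iff _ _).1 h'.symm)
      · exfalso
        rw [hk, pow_succ', pow_mul] at h0
        have h := congrArg (fun g : Equiv.Perm (ZMod n × ZMod m) => (g (0, 0)).1) h0
        simp only [Equiv.Perm.mul_apply, hTk, hη₂', Equiv.Perm.coe_one, id, sub_zero] at h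
        exact hcast 2 (by norm_num) (by norm_num) (by exact_mod_cast h)
  · have : Fact (Nat.Prime 2) := ⟨Nat.prime_two⟩
    apply orderOf_eq_prime
    · ext1 ⟨i, j⟩
      rw [pow_two]
      simp only [Equiv.Perm.mul_apply, hη₁, hη₂', Equiv.Perm.coe_one, id]
      ext
      · simp; ring
      · simp [chi_add hne, chi_sub hne, chi1, chi2, L2]; ring
    · intro h0
      have h := congrArg (fun g : Equiv.Perm (ZMod n × ZMod m) => (g (0, 0)).1) h0
      simp only [Equiv.Perm.mul_apply, hη₁, hη₂', Equiv.Perm.coe_one, id, sub_zero] at h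
      refine hcast 3 (by norm_num) (by norm_num) ?_
      push_cast; linear_combination h
  · have m1 : η₁ ∈ Subgroup.closure {η₁, η₂} := Subgroup.subset_closure (by simp)
    have m2 : η₂ ∈ Subgroup.closure {η₁, η₂} := Subgroup.subset_closure (by simp)
    have N2 : NF L q η₂ (true, 2, 2 * q, -3 * q) := by
      intro i j
      rw [hη₂', chi2]
      congr 1
      ring
    have N1k : ∀ k : ℕ, NF L q (η₁ ^ k) (false, k, 0, 0) := by
      intro k i j
      rw [hp1, chi_natCast hne]
      simp
    have A : ∀ g ∈ Subgroup.closure {η₁, η₂}, ∃ t, NF L q g t := by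
      intro g hg
      rw [← Subgroup.mem_toSubmonoid, Subgroup.closure_toSubmonoid_of_finite] at hg
      induction hg using Submonoid.closure_induction with
      | mem x hx =>
        rcases hx with rfl | rfl
        · exact ⟨_, by simpa using N1k 1⟩
        · exact ⟨_, N2⟩
      | one => exact ⟨_, by simpa using N1k 0⟩
      | mul x y _ _ hx hy =>
        obtain ⟨⟨b, a, α, β⟩, hx⟩ := hx
        obtain ⟨⟨c, a', α', β'⟩, hy⟩ := hy
        obtain ⟨α'', β'', h⟩ := NF_mul hne hd q x y b c a a' α β α' β' hx hy
        exact ⟨_, h⟩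
    have B : ∀ x y : ZMod m, ∃ g ∈ Subgroup.closure {η₁, η₂},
        ∀ i j, g (i, j) = (i, j + x * L i + y) := by
      intro x y
      refine ⟨(η₂ ^ 2) ^ (-(2 * x + y)).val * (η₁ * η₂ ^ 2 * η₁⁻¹) ^ (-(x + y)).val, ?_, ?_⟩
      · have := pow_mem m2 2
        exact mul_mem (pow_mem this _) (pow_mem (mul_mem (mul_mem m1 this) (inv_mem m1)) _)
      · intro i j
        rw [Equiv.Perm.mul_apply, hUk, hTk, ZMod.natCast_zmod_val, ZMod.natCast_zmod_val]
        congr 1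
        ring
    have C0 : ∀ b a, ∃ g ∈ Subgroup.closure {η₁, η₂}, ∃ α β, NF L q g (b, a, α, β) := by
      intro b a
      cases b
      · refine ⟨η₁ ^ a.val, pow_mem m1 _, 0, 0, ?_⟩
        have := N1k a.val
        rwa [ZMod.natCast_zmod_val] at this
      · have h := N1k (a - 2).val
        rw [ZMod.natCast_zmod_val] at h
        obtain ⟨α, β, h⟩ := NF_mul hne hd q _ _ _ _ _ _ _ _ _ _ h N2
        refine ⟨_, mul_mem (pow_mem m1 (a - 2).val) m2, α, β, ?_⟩
        simpa using h
    have C : ∀ t, ∃ g ∈ Subgroup.closure {η₁, η₂}, NF L q g t := by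
      rintro ⟨b, a, α, β⟩
      obtain ⟨h, hh, α0, β0, H⟩ := C0 b a
      obtain ⟨g, hg, G⟩ := B (if b then α0 - α else α - α0)
        (β - β0 - (if b then α0 - α else α - α0) * L a)
      refine ⟨g * h, mul_mem hg hh, ?_⟩
      have := NF_tau hd q g h b a _ _ _ _ G H
      convert this using 4
      · cases b <;> simp
      · rw [← hL]; ring
    choose F hF using fun g : Subgroup.closure {η₁, η₂} => A g.1 g.2
    have bij : Function.Bijective F := by
      constructor
      · intro g h hgh
        have h1 := hF g
        have h2 := hF h
        rw [hgh] at h1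
        generalize F h = t at h1 h2
        obtain ⟨b, a, α, β⟩ := t
        apply Subtype.ext
        ext1 ⟨i, j⟩
        cases b <;> rw [h1, h2]
      · intro t
        obtain ⟨g, hg, G⟩ := C t
        exact ⟨⟨g, hg⟩, NF_unique (by omega) hd q g _ _ (hF ⟨g, hg⟩) G⟩
    rw [Nat.card_congr (Equiv.ofBijective F bij)]
    simp only [Nat.card_prod, Nat.card_zmod]
    rw [Nat.card_eq_fintype_card, Fintype.card_bool]
    ring
end

section
/- The permutation ζ defined by ζ(i,j) = (2−i, j) is an involutory automorphism of Γ that fixes the vertex (1,1) and satisfies ζη₁ζ = η₁⁻¹ and ζη₂ζ = η₂⁻¹; in particular ζ normalises the subgroup ⟨η₁, η₂⟩. -/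
theorem statement18
    (m s n : ℕ) (hm : 3 ≤ m) (hmo : Odd m) (hs : 0 < s) (hs4 : s % 4 = 2) (hn : n = s * m)
    (η₁ η₂ ζ : Equiv.Perm (ZMod n × ZMod m))
    (hη₁ : ∀ (i : ZMod n) (j : ZMod m), η₁ (i, j) = (i + 1, 2 - j))
    (hη₂ : ∀ (i : ZMod n) (j : ZMod m),
      η₂ (i, j) = (2 - i, 2 - j + (((zrep i - 1) / 2 : ℕ) : ZMod m)))
    (hζ : ∀ (i : ZMod n) (j : ZMod m), ζ (i, j) = (2 - i, j)) :
    (∀ u v : ZMod n × ZMod m, (lexCycle n m).Adj (ζ u) (ζ v) ↔ (lexCycle n m).Adj u v) ∧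
      ζ * ζ = 1 ∧ ζ ((1, 1) : ZMod n × ZMod m) = (1, 1) ∧
      ζ * η₁ * ζ = η₁⁻¹ ∧ ζ * η₂ * ζ = η₂⁻¹ ∧
      ∀ g ∈ Subgroup.closure {η₁, η₂}, ζ * g * ζ ∈ Subgroup.closure {η₁, η₂} := by
  have hzz : ζ * ζ = 1 := by
    ext1 ⟨i, j⟩
    simp [hζ]
  have h1 : ζ * η₁ * ζ = η₁⁻¹ := by
    rw [eq_inv_iff_mul_eq_one]
    ext1 ⟨i, j⟩
    simp only [Equiv.Perm.mul_apply, Equiv.Perm.one_apply, hζ, hη₁, Prod.mk.injEq]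
    constructor <;> ring
  have h2 : ζ * η₂ * ζ = η₂⁻¹ := by
    rw [eq_inv_iff_mul_eq_one]
    ext1 ⟨i, j⟩
    simp only [Equiv.Perm.mul_apply, Equiv.Perm.one_apply, hζ, hη₂, Prod.mk.injEq, sub_sub_cancel]
    refine ⟨trivial, ?_⟩
    ring
  refine ⟨?_, hzz, ?_, h1, h2, ?_⟩
  · rintro ⟨i, j⟩ ⟨k, l⟩
    have e1 : (2 - k = 2 - i + 1) ↔ i = k + 1 := by
      constructor <;> intro h <;> linear_combination h
    have e2 : (2 - i = 2 - k + 1) ↔ k = i + 1 := by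
      constructor <;> intro h <;> linear_combination h
    simp only [lexCycle, SimpleGraph.fromRel_adj, (EmbeddingLike.apply_eq_iff_eq ζ).ne]
    simp only [hζ, e1, e2]
    tauto
  · rw [hζ]
    norm_num
  · intro g hg
    induction hg using Subgroup.closure_induction with
    | mem x hx =>
      rcases hx with rfl | rfl
      · rw [h1]
        exact inv_mem (Subgroup.subset_closure (by simp))
      · rw [h2]
        exact inv_mem (Subgroup.subset_closure (by simp))
    | one => simp [hzz, one_mem]
    | mul x y _ _ hx hy =>
      have : ζ * (x * y) * ζ = (ζ * x * ζ) * (ζ * y * ζ) := by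
        calc ζ * (x * y) * ζ = ζ * x * 1 * y * ζ := by group
          _ = ζ * x * (ζ * ζ) * y * ζ := by rw [hzz]
          _ = _ := by simp only [mul_assoc]
      rw [this]
      exact mul_mem hx hy
    | inv x _ hx =>
      have hi : ζ⁻¹ = ζ := inv_eq_of_mul_eq_one_left hzz
      have : ζ * x⁻¹ * ζ = (ζ * x * ζ)⁻¹ := by
        simp only [mul_inv_rev, hi, mul_assoc]
      rw [this]
      exact inv_mem hx
end

section
/- The subgroup H = ⟨η₁, η₂⟩ of the automorphism group of Γ acts transitively on the arcs of Γ with trivial arc stabilisers; that is, H acts simply transitively (regularly) on the 2m²n arcs of Γ. -/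
theorem aux_P {n m : ℕ} [NeZero n] [NeZero m] (hn2 : (2 : ZMod n) ≠ 0)
    (r : ZMod n →+* ZMod m) (χ : ZMod n → ZMod m)
    (χadd : ∀ a b, χ (a + b) = χ a * χ b) (χsub : ∀ a b, χ (a - b) = χ a * χ b)
    (χ1 : χ 1 = -1) (χ0 : χ 0 = 1) (χ2 : χ 2 = 1) (χsq : ∀ a, χ a * χ a = 1)
    (h : ZMod m) (hh : 2 * h = 1)
    (η₁ η₂ : Equiv.Perm (ZMod n × ZMod m))
    (hη₁ : ∀ (i : ZMod n) (j : ZMod m), η₁ (i, j) = (i + 1, 2 - j))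
    (hη₂ : ∀ (i : ZMod n) (j : ZMod m),
      η₂ (i, j) = (2 - i, 2 - j + (h * r i - 3 * h ^ 2 - h ^ 2 * χ i)))
    (g : Equiv.Perm (ZMod n × ZMod m)) (hg : g ∈ Subgroup.closure {η₁, η₂}) :
    ∃ (a : ZMod n) (α β : ZMod m),
      (∀ i j, g (i, j) = (a + i, χ a * j + α * r i + β)) ∨
      (∀ i j, g (i, j) = (a - i, -χ a * (j + h ^ 3 * χ i) + α * r i + β - h ^ 3 * χ a * χ i)) := by
  have hone : ∃ (a : ZMod n) (α β : ZMod m),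
      (∀ i j, (1 : Equiv.Perm (ZMod n × ZMod m)) (i, j) = (a + i, χ a * j + α * r i + β)) ∨
      (∀ i j, (1 : Equiv.Perm (ZMod n × ZMod m)) (i, j) =
        (a - i, -χ a * (j + h ^ 3 * χ i) + α * r i + β - h ^ 3 * χ a * χ i)) :=
    ⟨0, 0, 0, Or.inl fun i j => by simp [χ0]⟩
  have hmul : ∀ x y : Equiv.Perm (ZMod n × ZMod m),
    (∃ (a : ZMod n) (α β : ZMod m),
      (∀ i j, x (i, j) = (a + i, χ a * j + α * r i + β)) ∨
      (∀ i j, x (i, j) = (a - i, -χ a * (j + h ^ 3 * χ i) + α * r i + β - h ^ 3 * χ a * χ i))) →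
    (∃ (a : ZMod n) (α β : ZMod m),
      (∀ i j, y (i, j) = (a + i, χ a * j + α * r i + β)) ∨
      (∀ i j, y (i, j) = (a - i, -χ a * (j + h ^ 3 * χ i) + α * r i + β - h ^ 3 * χ a * χ i))) →
    (∃ (a : ZMod n) (α β : ZMod m),
      (∀ i j, (x * y) (i, j) = (a + i, χ a * j + α * r i + β)) ∨
      (∀ i j, (x * y) (i, j) =
        (a - i, -χ a * (j + h ^ 3 * χ i) + α * r i + β - h ^ 3 * χ a * χ i))) := by
    rintro x y ⟨a, α, β, hx | hx⟩ ⟨b, γ, δ, hy | hy⟩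
    · refine ⟨a + b, χ a * γ + α, χ a * δ + α * r b + β, Or.inl fun i j => ?_⟩
      rw [Equiv.Perm.mul_apply, hy, hx]
      simp only [Prod.mk.injEq, χadd, χsub, map_add, map_sub]
      exact ⟨by ring, by ring⟩
    · refine ⟨a + b, χ a * γ - α, χ a * δ + α * r b + β, Or.inr fun i j => ?_⟩
      rw [Equiv.Perm.mul_apply, hy, hx]
      simp only [Prod.mk.injEq, χadd, χsub, map_add, map_sub]
      exact ⟨by ring, by ring⟩
    · refine ⟨a - b, -χ a * γ + α, -χ a * δ + α * r b + β, Or.inr fun i j => ?_⟩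
      rw [Equiv.Perm.mul_apply, hy, hx]
      simp only [Prod.mk.injEq, χadd, χsub, map_add, map_sub]
      exact ⟨by ring, by ring⟩
    · refine ⟨a - b, -χ a * γ + -α, -χ a * δ + α * r b + β, Or.inl fun i j => ?_⟩
      rw [Equiv.Perm.mul_apply, hy, hx]
      simp only [Prod.mk.injEq, χadd, χsub, map_add, map_sub]
      exact ⟨by ring, by ring⟩
  induction hg using Subgroup.closure_induction with
  | mem x hx =>
    rcases hx with rfl | hx
    · refine ⟨1, 0, 2, Or.inl fun i j => ?_⟩
      rw [hη₁, χ1]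
      simp only [Prod.mk.injEq]
      exact ⟨by ring, by ring⟩
    · rw [Set.mem_singleton_iff] at hx
      subst hx
      refine ⟨2, h, 2 - 3 * h ^ 2, Or.inr fun i j => ?_⟩
      rw [hη₂, χ2]
      simp only [Prod.mk.injEq]
      refine ⟨by trivial, ?_⟩
      linear_combination (h ^ 2 * χ i) * hh
  | one => exact hone
  | mul x y _ _ hx hy => exact hmul x y hx hy
  | inv x _ hx =>
    have hp : ∀ k : ℕ, ∃ (a : ZMod n) (α β : ZMod m),
      (∀ i j, (x ^ k) (i, j) = (a + i, χ a * j + α * r i + β)) ∨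
      (∀ i j, (x ^ k) (i, j) =
        (a - i, -χ a * (j + h ^ 3 * χ i) + α * r i + β - h ^ 3 * χ a * χ i)) := by
      intro k
      induction k with
      | zero => rw [pow_zero]; exact hone
      | succ k ih => rw [pow_succ]; exact hmul _ _ ih hx
    have : x⁻¹ = x ^ (orderOf x - 1) := by
      rw [inv_eq_iff_mul_eq_one, ← pow_succ', Nat.sub_add_cancel (orderOf_pos x), pow_orderOf_eq_one]
    rw [this]
    exact hp _

theorem aux_main {n m : ℕ} [NeZero n] [NeZero m] (hn2 : (2 : ZMod n) ≠ 0)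
    (r : ZMod n →+* ZMod m) (χ : ZMod n → ZMod m)
    (χadd : ∀ a b, χ (a + b) = χ a * χ b) (χsub : ∀ a b, χ (a - b) = χ a * χ b)
    (χ1 : χ 1 = -1) (χ0 : χ 0 = 1) (χ2 : χ 2 = 1) (χsq : ∀ a, χ a * χ a = 1)
    (h : ZMod m) (hh : 2 * h = 1)
    (η₁ η₂ : Equiv.Perm (ZMod n × ZMod m))
    (hη₁ : ∀ (i : ZMod n) (j : ZMod m), η₁ (i, j) = (i + 1, 2 - j))
    (hη₂ : ∀ (i : ZMod n) (j : ZMod m),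
      η₂ (i, j) = (2 - i, 2 - j + (h * r i - 3 * h ^ 2 - h ^ 2 * χ i))) :
    (∀ u₁ w₁ u₂ w₂ : ZMod n × ZMod m,
        (lexCycle n m).Adj u₁ w₁ → (lexCycle n m).Adj u₂ w₂ →
        ∃ g ∈ Subgroup.closure {η₁, η₂}, g u₁ = u₂ ∧ g w₁ = w₂) ∧
      (∀ u w : ZMod n × ZMod m, (lexCycle n m).Adj u w →
        ∀ g ∈ Subgroup.closure {η₁, η₂}, g u = u → g w = w → g = 1) := by
  have hadj : ∀ u w : ZMod n × ZMod m, (lexCycle n m).Adj u w →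
      w.1 = u.1 + 1 ∨ w.1 = u.1 + (-1) := by
    intro u w huw
    rw [lexCycle, SimpleGraph.fromRel_adj] at huw
    rcases huw.2 with h | h
    · exact Or.inl h
    · right; rw [h]; ring
  have m1 : η₁ ∈ Subgroup.closure {η₁, η₂} := Subgroup.subset_closure (by simp)
  have m2 : η₂ ∈ Subgroup.closure {η₁, η₂} := Subgroup.subset_closure (by simp)
  constructor
  · -- translations
    have hT : ∀ i j, (η₂ * η₂) (i, j) = (i, j + 1 - r i) := by
      intro i j
      rw [Equiv.Perm.mul_apply, hη₂, hη₂]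
      simp only [Prod.mk.injEq, χsub, χ2, map_sub, map_ofNat]
      refine ⟨by ring, ?_⟩
      linear_combination (1 - r i) * hh
    have hS : ∀ i j, (η₁⁻¹ * (η₂ * η₂) * η₁) (i, j) = (i, j + r i) := by
      intro i j
      rw [Equiv.Perm.mul_apply, Equiv.Perm.mul_apply, Equiv.Perm.inv_eq_iff_eq, hη₁, hT, hη₁]
      simp only [Prod.mk.injEq, map_add, map_one, true_and]
      ring
    have mT : η₂ * η₂ ∈ Subgroup.closure {η₁, η₂} := mul_mem m2 m2
    have mS : η₁⁻¹ * (η₂ * η₂) * η₁ ∈ Subgroup.closure {η₁, η₂} :=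
      mul_mem (mul_mem (inv_mem m1) mT) m1
    generalize η₁⁻¹ * (η₂ * η₂) * η₁ = S at hS mS
    generalize η₂ * η₂ = T at hT mT
    have hSk : ∀ k : ℕ, ∀ i j, (S ^ k) (i, j) = (i, j + k * r i) := by
      intro k
      induction k with
      | zero => intro i j; simp
      | succ k ih =>
        intro i j
        rw [pow_succ, Equiv.Perm.mul_apply, hS, ih]
        simp only [Prod.mk.injEq, true_and]; push_cast; ring
    have hUk : ∀ k : ℕ, ∀ i j, ((T * S) ^ k) (i, j) = (i, j + k) := by
      intro k
      induction k with
      | zero => intro i j; simp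
      | succ k ih =>
        intro i j
        rw [pow_succ, Equiv.Perm.mul_apply, Equiv.Perm.mul_apply, hS, hT, ih]
        simp only [Prod.mk.injEq, true_and]; push_cast; ring
    have htr : ∀ α β : ZMod m, ∃ g ∈ Subgroup.closure {η₁, η₂},
        ∀ i j, g (i, j) = (i, j + α * r i + β) := by
      intro α β
      refine ⟨(T * S) ^ β.val * S ^ α.val, mul_mem (pow_mem (mul_mem mT mS) _) (pow_mem mS _), ?_⟩
      intro i j
      rw [Equiv.Perm.mul_apply, hSk, hUk, ZMod.natCast_zmod_val, ZMod.natCast_zmod_val]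
    have h1k : ∀ k : ℕ, ∀ u, ((η₁ ^ k) u).1 = u.1 + k := by
      intro k
      induction k with
      | zero => intro u; simp
      | succ k ih =>
        rintro ⟨i, j⟩
        rw [pow_succ, Equiv.Perm.mul_apply, hη₁, ih]
        push_cast; ring
    have hsame : ∀ d : ℤ, d * d = 1 → ∀ u₁ w₁ u₂ w₂ : ZMod n × ZMod m,
        w₁.1 = u₁.1 + d → w₂.1 = u₂.1 + d →
        ∃ g ∈ Subgroup.closure {η₁, η₂}, g u₁ = u₂ ∧ g w₁ = w₂ := by
      intro d hd u₁ w₁ u₂ w₂ hw1 hw2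
      have e1 := h1k (u₂.1 - u₁.1).val u₁
      have e2 := h1k (u₂.1 - u₁.1).val w₁
      have mk := pow_mem m1 (u₂.1 - u₁.1).val
      generalize η₁ ^ (u₂.1 - u₁.1).val = E at e1 e2 mk
      rw [ZMod.natCast_zmod_val] at e1 e2
      obtain ⟨x, y⟩ := u₂
      obtain ⟨z, w⟩ := w₂
      rcases h1 : E u₁ with ⟨p, q⟩
      rcases h2 : E w₁ with ⟨p', q'⟩
      rw [h1] at e1
      rw [h2] at e2
      simp only at e1 e2 hw2
      have hp : p = x := by rw [e1]; ring
      have hp' : p' = x + d := by rw [e2, hw1]; ring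
      subst hp hp' hw2
      obtain ⟨g, hg, hg'⟩ := htr (d * ((w - q') - (y - q))) ((y - q) - (d * ((w - q') - (y - q))) * r p)
      have hdm : (d : ZMod m) * d = 1 := by exact_mod_cast congrArg (Int.cast : ℤ → ZMod m) hd
      refine ⟨g * E, mul_mem hg mk, ?_, ?_⟩
      · rw [Equiv.Perm.mul_apply, h1, hg']
        simp only [Prod.mk.injEq, true_and]; ring
      · rw [Equiv.Perm.mul_apply, h2, hg']
        simp only [Prod.mk.injEq, true_and, map_add, map_intCast]
        linear_combination ((w - q') - (y - q)) * hdm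
    have hη2f : ∀ u, (η₂ u).1 = 2 - u.1 := by
      rintro ⟨i, j⟩; rw [hη₂]
    have hopp : ∀ d : ℤ, d * d = 1 → ∀ u₁ w₁ u₂ w₂ : ZMod n × ZMod m,
        w₁.1 = u₁.1 - d → w₂.1 = u₂.1 + d →
        ∃ g ∈ Subgroup.closure {η₁, η₂}, g u₁ = u₂ ∧ g w₁ = w₂ := by
      intro d hd u₁ w₁ u₂ w₂ hw1 hw2
      obtain ⟨g, hg, h1, h2⟩ := hsame d hd (η₂ u₁) (η₂ w₁) u₂ w₂
        (by rw [hη2f, hη2f, hw1]; ring) hw2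
      exact ⟨g * η₂, mul_mem hg m2, h1, h2⟩
    intro u₁ w₁ u₂ w₂ a1 a2
    rcases hadj _ _ a1 with b1 | b1 <;> rcases hadj _ _ a2 with b2 | b2
    · exact hsame 1 (by norm_num) _ _ _ _ (by simpa using b1) (by simpa using b2)
    · exact hopp (-1) (by norm_num) _ _ _ _ (by simpa using b1) (by simpa using b2)
    · exact hopp 1 (by norm_num) _ _ _ _ (by rw [b1]; push_cast; ring) (by simpa using b2)
    · exact hsame (-1) (by norm_num) _ _ _ _ (by simpa using b1) (by simpa using b2)
  · rintro ⟨i, j⟩ ⟨i', j'⟩ huw g hg hu hw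
    have hd : ∃ d : ℤ, d * d = 1 ∧ i' = i + d := by
      rcases hadj _ _ huw with b | b
      · exact ⟨1, by norm_num, by simpa using b⟩
      · exact ⟨-1, by norm_num, by simpa using b⟩
    obtain ⟨d, hd, rfl⟩ := hd
    have hdm : (d : ZMod m) * d = 1 := by exact_mod_cast congrArg (Int.cast : ℤ → ZMod m) hd
    have hdn : (d : ZMod n) * d = 1 := by exact_mod_cast congrArg (Int.cast : ℤ → ZMod n) hd
    obtain ⟨a, α, β, H | H⟩ := aux_P hn2 r χ χadd χsub χ1 χ0 χ2 χsq h hh η₁ η₂ hη₁ hη₂ g hg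
    · rw [H] at hu hw
      simp only [Prod.mk.injEq, map_add, map_intCast] at hu hw
      have ha : a = 0 := by linear_combination hu.1
      subst ha
      rw [χ0] at hu hw
      have hα : α = 0 := by linear_combination d * hw.2 - d * hu.2 - α * hdm
      subst hα
      have hβ : β = 0 := by linear_combination hu.2
      subst hβ
      ext1 ⟨x, y⟩
      rw [H]; simp [χ0]
    · exfalso
      rw [H] at hu hw
      simp only [Prod.mk.injEq] at hu hw
      apply hn2
      linear_combination d * hu.1 - d * hw.1 - 2 * hdn

theorem statement19
    (m s n : ℕ) (hm : 3 ≤ m) (hmo : Odd m) (hs : 0 < s) (hs4 : s % 4 = 2) (hn : n = s * m)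
    (η₁ η₂ : Equiv.Perm (ZMod n × ZMod m))
    (hη₁ : ∀ (i : ZMod n) (j : ZMod m), η₁ (i, j) = (i + 1, 2 - j))
    (hη₂ : ∀ (i : ZMod n) (j : ZMod m),
      η₂ (i, j) = (2 - i, 2 - j + (((zrep i - 1) / 2 : ℕ) : ZMod m)))
    :
    (∀ u₁ w₁ u₂ w₂ : ZMod n × ZMod m,
        (lexCycle n m).Adj u₁ w₁ → (lexCycle n m).Adj u₂ w₂ →
        ∃ g ∈ Subgroup.closure {η₁, η₂}, g u₁ = u₂ ∧ g w₁ = w₂) ∧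
      (∀ u w : ZMod n × ZMod m, (lexCycle n m).Adj u w →
        ∀ g ∈ Subgroup.closure {η₁, η₂}, g u = u → g w = w → g = 1) := by
  have hmn : m ∣ n := ⟨s, by rw [hn, mul_comm]⟩
  have hne : Even n := by
    rw [hn]; exact Even.mul_right (Nat.even_iff.mpr (by omega)) m
  have hn6 : 6 ≤ n := by
    rw [hn]; exact Nat.mul_le_mul (by omega : 2 ≤ s) hm
  haveI : NeZero n := ⟨by omega⟩
  haveI : NeZero m := ⟨by omega⟩
  have hpm : ∀ k : ℕ, (-1 : ZMod m) ^ (k % n) = (-1) ^ k := by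
    intro k
    conv_rhs => rw [← Nat.mod_add_div k n, pow_add, pow_mul, hne.neg_one_pow, one_pow, mul_one]
  obtain ⟨h, hh⟩ : ∃ h : ZMod m, 2 * h = 1 := by
    obtain ⟨k, hk⟩ := hmo
    refine ⟨((k + 1 : ℕ) : ZMod m), ?_⟩
    have : ((2 * k + 1 : ℕ) : ZMod m) = 0 := by rw [← hk]; simp
    push_cast at this ⊢
    linear_combination this
  have χadd : ∀ a b : ZMod n, (-1 : ZMod m) ^ (a + b).val = (-1) ^ a.val * (-1) ^ b.val := by
    intro a b
    rw [ZMod.val_add, hpm, pow_add]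
  have χsq : ∀ a : ZMod n, (-1 : ZMod m) ^ a.val * (-1) ^ a.val = 1 := by
    intro a
    rw [← pow_add, Even.neg_one_pow ⟨_, rfl⟩]
  have χ1 : (-1 : ZMod m) ^ (1 : ZMod n).val = -1 := by
    haveI : Fact (1 < n) := ⟨by omega⟩
    rw [ZMod.val_one, pow_one]
  have χ2 : (-1 : ZMod m) ^ (2 : ZMod n).val = 1 := by
    rw [← one_add_one_eq_two, χadd, χ1]; ring
  refine aux_main (n := n) (m := m) ?_ (ZMod.castHom hmn (ZMod m)) (fun i => (-1) ^ i.val)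
    χadd ?_ χ1 (by simp) χ2 χsq h hh η₁ η₂ hη₁ ?_
  · intro h2
    have h3 : ((2 : ℕ) : ZMod n) = 0 := by exact_mod_cast h2
    rw [ZMod.natCast_eq_zero_iff] at h3
    have := Nat.le_of_dvd (by norm_num) h3
    omega
  · intro a b
    have := χadd (a - b) b
    rw [sub_add_cancel] at this
    simp only [this]
    rw [mul_assoc, χsq, mul_one]
  · intro i j
    rw [hη₂]
    simp only [Prod.mk.injEq, true_and, add_right_inj]
    have hk : ((zrep i : ℕ) : ZMod m) = ZMod.castHom hmn (ZMod m) i ∧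
        (-1 : ZMod m) ^ (zrep i) = (-1) ^ i.val ∧ 1 ≤ zrep i := by
      have hv : ((i.val : ℕ) : ZMod m) = ZMod.castHom hmn (ZMod m) i := by
        conv_rhs => rw [← ZMod.natCast_zmod_val i, map_natCast]
      unfold zrep
      split_ifs with h0
      · refine ⟨?_, ?_, by omega⟩
        · rw [← hv, h0, Nat.cast_zero, (ZMod.natCast_eq_zero_iff n m).mpr hmn]
        · rw [h0, hne.neg_one_pow, pow_zero]
      · exact ⟨hv, rfl, by omega⟩
    obtain ⟨k1, k2, k3⟩ := hk
    rw [← k1, ← k2]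
    generalize zrep i = k at k3
    have : ∃ q, k = 2 * q + 1 ∨ k = 2 * q + 2 := ⟨(k - 1) / 2, by omega⟩
    obtain ⟨q, rfl | rfl⟩ := this
    · rw [show (2 * q + 1 - 1) / 2 = q by omega, pow_add, pow_mul]
      push_cast
      norm_num
      linear_combination (-q + h) * hh
    · rw [show (2 * q + 2 - 1) / 2 = q by omega, pow_add, pow_mul]
      push_cast
      norm_num
      linear_combination (-q + 2 * h) * hh
end
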